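/- arXiv:2512.17980 — 3 statements merged into one kernel-verified Lean document; each statement's English description precedes it below -/
import Mathlib

section
/- Let P be a Pauli string on n qubits with labeling p. If p is neither the all-identity labeling nor a labeling having exactly one position labeled Z and the identity at all other positions, then the Pauli coefficient α_P = 2^{−n} · Σ_{x=0}^{2^n−1} (a + d·x) · P_{x,x} of the diagonal matrix D vanishes, i.e. α_P = 0. -/
/-- Labels for single-qubit Pauli matrices. -/
inductive PauliLabel
  | I | X | Y | Z
  deriving DecidableEq

/-- The single-qubit Pauli matrices. -/
noncomputable def pauliMat : PauliLabel → Matrix (Fin 2) (Fin 2) ℂ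
  | PauliLabel.I => 1
  | PauliLabel.X => !![0, 1; 1, 0]
  | PauliLabel.Y => !![0, -Complex.I; Complex.I, 0]
  | PauliLabel.Z => !![1, 0; 0, -1]

/-- The `j`-th binary digit of `x`, as an element of `Fin 2`. -/
def bitF (j x : ℕ) : Fin 2 := if Nat.testBit x j then 1 else 0

/-- The Pauli string on `n` qubits with labeling `p`, realized entrywise as
`P_{x,y} = ∏_j (σ_{p_j})_{x_j, y_j}`. -/
noncomputable def pauliString (n : ℕ) (p : Fin n → PauliLabel) :
    Matrix (Fin (2 ^ n)) (Fin (2 ^ n)) ℂ :=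
  fun x y => ∏ j : Fin n, pauliMat (p j) (bitF j.val x.val) (bitF j.val y.val)

noncomputable def auxQ (p : ℕ → PauliLabel) (n x : ℕ) : ℂ :=
  ∏ j ∈ Finset.range n, pauliMat (p j) (bitF j x) (bitF j x)

lemma auxQ_lo (p : ℕ → PauliLabel) (n x : ℕ) (hx : x < 2 ^ n) :
    auxQ p (n + 1) x = auxQ p n x * pauliMat (p n) 0 0 := by
  unfold auxQ
  rw [Finset.prod_range_succ]
  have : bitF n x = 0 := by simp [bitF, Nat.testBit_lt_two_pow hx]
  rw [this]

lemma auxQ_hi (p : ℕ → PauliLabel) (n x : ℕ) (hx : x < 2 ^ n) :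
    auxQ p (n + 1) (2 ^ n + x) = auxQ p n x * pauliMat (p n) 1 1 := by
  unfold auxQ
  rw [Finset.prod_range_succ]
  have : bitF n (2 ^ n + x) = 1 := by
    simp [bitF, Nat.testBit_two_pow_add_eq, Nat.testBit_lt_two_pow hx]
  rw [this]
  congr 1
  refine Finset.prod_congr rfl fun j hj => ?_
  have : bitF j (2 ^ n + x) = bitF j x := by
    simp [bitF, Nat.testBit_two_pow_add_gt (Finset.mem_range.1 hj)]
  rw [this]

lemma aux_step (p : ℕ → PauliLabel) (n : ℕ) (f : ℕ → ℂ) :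
    ∑ x ∈ Finset.range (2 ^ (n + 1)), f x * auxQ p (n + 1) x =
      (∑ x ∈ Finset.range (2 ^ n), f x * auxQ p n x) * pauliMat (p n) 0 0 +
      (∑ x ∈ Finset.range (2 ^ n), f (2 ^ n + x) * auxQ p n x) * pauliMat (p n) 1 1 := by
  rw [pow_succ, mul_two, Finset.sum_range_add, Finset.sum_mul, Finset.sum_mul]
  congr 1
  · refine Finset.sum_congr rfl fun x hx => ?_
    rw [auxQ_lo p n x (Finset.mem_range.1 hx), mul_assoc]
  · refine Finset.sum_congr rfl fun x hx => ?_
    rw [auxQ_hi p n x (Finset.mem_range.1 hx), mul_assoc]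

lemma aux_Z {q : PauliLabel} (h : q = PauliLabel.Z) :
    pauliMat q 0 0 = 1 ∧ pauliMat q 1 1 = -1 := by
  subst h; simp [pauliMat]

lemma aux_A (p : ℕ → PauliLabel) (i : ℕ) (hi : p i = PauliLabel.Z) (c : ℂ) (n : ℕ) (h : i < n) :
    ∑ x ∈ Finset.range (2 ^ n), c * auxQ p n x = 0 := by
  induction n with
  | zero => omega
  | succ n ih =>
    rw [aux_step p n (fun _ => c)]
    rcases Nat.lt_succ_iff_lt_or_eq.1 h with h | rfl
    · simp [ih h]
    · simp [aux_Z hi]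

lemma aux_B (p : ℕ → PauliLabel) (i k : ℕ) (hik : i < k) (hi : p i = PauliLabel.Z)
    (hk : p k = PauliLabel.Z) (d : ℂ) (n : ℕ) (a : ℂ) (h : k < n) :
    ∑ x ∈ Finset.range (2 ^ n), (a + d * (x : ℂ)) * auxQ p n x = 0 := by
  induction n generalizing a with
  | zero => omega
  | succ n ih =>
    rw [aux_step p n (fun x => a + d * (x : ℂ))]
    have e : ∑ x ∈ Finset.range (2 ^ n), (a + d * ((2 ^ n + x : ℕ) : ℂ)) * auxQ p n x =
        ∑ x ∈ Finset.range (2 ^ n), (a + d * (x : ℂ)) * auxQ p n x := by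
      have h0 := aux_A p i hi (d * 2 ^ n) n (by omega)
      rw [← sub_eq_zero, ← Finset.sum_sub_distrib, ← h0]
      refine Finset.sum_congr rfl fun x _ => ?_
      push_cast
      ring
    rw [e]
    rcases Nat.lt_succ_iff_lt_or_eq.1 h with h | rfl
    · simp [ih a h]
    · simp [aux_Z hk]

/-- If the labeling `p` is neither all-identity nor "exactly one `Z` and identity elsewhere",
then the Pauli coefficient `α_P = 2^{-n} ∑_x (a + d·x) P_{x,x}` of the diagonal matrix `D`
with entries `a + d·x` vanishes. -/
theorem stmt_0 (n : ℕ) (hn : 1 ≤ n) (a d : ℝ) (p : Fin n → PauliLabel)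
    (hI : p ≠ fun _ => PauliLabel.I)
    (hZ : ¬ ∃ k : Fin n, p k = PauliLabel.Z ∧ ∀ j : Fin n, j ≠ k → p j = PauliLabel.I) :
    (1 / (2 : ℂ) ^ n) * ∑ x : Fin (2 ^ n), ((a : ℂ) + (d : ℂ) * (x.val : ℂ)) *
      pauliString n p x x = 0 := by
  by_cases hXY : ∃ j, p j = PauliLabel.X ∨ p j = PauliLabel.Y
  · obtain ⟨j, hj⟩ := hXY
    rw [Finset.sum_eq_zero, mul_zero]
    intro x _
    have : pauliString n p x x = 0 := by
      unfold pauliString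
      refine Finset.prod_eq_zero (Finset.mem_univ j) ?_
      generalize bitF j.val x.val = b
      rcases hj with hj | hj <;> rw [hj] <;> fin_cases b <;> simp [pauliMat]
    rw [this, mul_zero]
  · push Not at hXY
    have hIZ : ∀ j, p j ≠ PauliLabel.I → p j = PauliLabel.Z := by
      intro j hj
      have := hXY j
      cases h : p j <;> simp_all
    obtain ⟨k, hk⟩ := Function.ne_iff.1 hI
    have hkZ := hIZ k hk
    have : ∃ l, l ≠ k ∧ p l ≠ PauliLabel.I := by
      by_contra! hc
      exact hZ ⟨k, hkZ, hc⟩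
    obtain ⟨l, hlk, hl⟩ := this
    have hlZ := hIZ l hl
    let p' : ℕ → PauliLabel := fun j => if h : j < n then p ⟨j, h⟩ else PauliLabel.I
    have hp' : ∀ j : Fin n, p' j.val = p j := fun j => by simp [p']
    have hP : ∀ x : Fin (2 ^ n), pauliString n p x x = auxQ p' n x.val := by
      intro x
      unfold pauliString auxQ
      rw [Finset.prod_range]
      simp only [hp']
    simp only [hP]
    rw [← Finset.sum_range (fun x : ℕ => ((a : ℂ) + (d : ℂ) * (x : ℂ)) * auxQ p' n x)]
    have hne : l.val ≠ k.val := fun h => hlk (Fin.ext h)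
    rcases lt_or_gt_of_ne hne with h | h
    · rw [aux_B p' l k h (by rw [hp', hlZ]) (by rw [hp', hkZ]) d n a k.isLt, mul_zero]
    · rw [aux_B p' k l h (by rw [hp', hkZ]) (by rw [hp', hlZ]) d n a l.isLt, mul_zero]
end

section
/- The diagonal matrix D admits the exact Pauli decomposition D = (a + d·(2^n − 1)/2)·I + Σ_{j=0}^{n−1} (−(d/2)·2^j)·Z_j, where I is the 2^n × 2^n identity matrix; that is, the only Pauli strings appearing with nonzero coefficient in the Pauli expansion of D are the identity, with coefficient a + d·(2^n − 1)/2, and the single-qubit Z strings Z_j, with coefficients −(d/2)·2^j. -/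
/-- The `j`-th binary digit of `x`, as a natural number in `{0,1}`. -/
def bitN (j x : ℕ) : ℕ := if Nat.testBit x j then 1 else 0

/-- The `2^n × 2^n` diagonal matrix `D` with diagonal entries `D_{x,x} = a + d·x`. -/
noncomputable def Dmat (n : ℕ) (a d : ℝ) : Matrix (Fin (2 ^ n)) (Fin (2 ^ n)) ℂ :=
  Matrix.diagonal fun x => (a : ℂ) + (d : ℂ) * (x.val : ℂ)

/-- The single-qubit Pauli-`Z` string on qubit `j`: the `2^n × 2^n` diagonal matrix with
diagonal entries `(Z_j)_{x,x} = (−1)^{bit_j(x)}`. -/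
noncomputable def Zstring (n : ℕ) (j : Fin n) : Matrix (Fin (2 ^ n)) (Fin (2 ^ n)) ℂ :=
  Matrix.diagonal fun x => (-1 : ℂ) ^ bitN j.val x.val

lemma key_sum (n : ℕ) : ∀ x : ℕ, x < 2 ^ n →
    ∑ j ∈ Finset.range n, (2 : ℂ) ^ j * (-1 : ℂ) ^ bitN j x = (2 : ℂ) ^ n - 1 - 2 * (x : ℂ) := by
  induction n with
  | zero =>
    intro x hx
    have : x = 0 := by simpa using hx
    simp [this]
  | succ n ih =>
    intro x hx
    have h := ih (x / 2) (by rw [pow_succ] at hx; omega)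
    have hb : ∀ j, bitN (j + 1) x = bitN j (x / 2) := by
      intro j
      simp [bitN, Nat.testBit_succ]
    have h0 : (-1 : ℂ) ^ bitN 0 x = 1 - 2 * ((x % 2 : ℕ) : ℂ) := by
      rcases Nat.mod_two_eq_zero_or_one x with h | h <;> simp [bitN, Nat.testBit_zero, h]
      norm_num
    have hx2 : (x : ℂ) = 2 * ((x / 2 : ℕ) : ℂ) + ((x % 2 : ℕ) : ℂ) := by
      exact_mod_cast (Nat.div_add_mod x 2).symm
    rw [Finset.sum_range_succ', h0]
    have : ∀ j ∈ Finset.range n, (2 : ℂ) ^ (j + 1) * (-1 : ℂ) ^ bitN (j + 1) x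
        = 2 * ((2 : ℂ) ^ j * (-1 : ℂ) ^ bitN j (x / 2)) := by
      intro j _
      rw [hb, pow_succ]; ring
    rw [Finset.sum_congr rfl this, ← Finset.mul_sum, h, hx2]
    ring

/-- The diagonal matrix `D` admits the exact Pauli decomposition
`D = (a + d·(2^n − 1)/2)·I + ∑_j (−(d/2)·2^j)·Z_j`. -/
theorem stmt_1 (n : ℕ) (hn : 1 ≤ n) (a d : ℝ) :
    Dmat n a d
      = ((a : ℂ) + (d : ℂ) * ((2 : ℂ) ^ n - 1) / 2) •
          (1 : Matrix (Fin (2 ^ n)) (Fin (2 ^ n)) ℂ)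
        + ∑ j : Fin n, (-((d : ℂ) / 2) * (2 : ℂ) ^ (j : ℕ)) • Zstring n j := by
  ext x y
  rw [Matrix.add_apply, Matrix.sum_apply]
  by_cases hxy : x = y
  · subst hxy
    have h := key_sum n x.val x.isLt
    rw [Finset.sum_range] at h
    simp only [Dmat, Zstring, Matrix.smul_apply, Matrix.diagonal_apply_eq, Matrix.one_apply_eq,
      smul_eq_mul, mul_assoc]
    rw [← Finset.mul_sum, h]
    ring
  · simp [Dmat, Zstring, Matrix.diagonal_apply_ne _ hxy, Matrix.one_apply_ne hxy]
end

section
/- For every j ∈ {0, …, n−1}, the Pauli coefficient of D at the single-qubit Z string Z_j equals 2^{−n} · Σ_{x=0}^{2^n−1} (a + d·x)·(−1)^{bit_j(x)} = −(d/2)·2^j. -/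
theorem aux_sum (j k : ℕ) (d : ℂ) : ∀ a : ℂ,
    ∑ x ∈ Finset.range (2 ^ (j + 1 + k)), (a + d * (x : ℂ)) * (-1 : ℂ) ^ bitN j x
      = -(d / 2) * 2 ^ j * 2 ^ (j + 1 + k) := by
  induction k with
  | zero =>
    intro a
    have h2 : 2 ^ (j + 1 + 0) = 2 ^ j + 2 ^ j := by rw [add_zero, pow_succ]; ring
    rw [h2, Finset.sum_range_add, ← Finset.sum_add_distrib]
    have : ∀ x ∈ Finset.range (2 ^ j),
        (a + d * (x : ℂ)) * (-1 : ℂ) ^ bitN j x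
          + (a + d * ((2 ^ j + x : ℕ) : ℂ)) * (-1 : ℂ) ^ bitN j (2 ^ j + x) = -d * 2 ^ j := by
      intro x hx
      have hx' : x < 2 ^ j := Finset.mem_range.mp hx
      have h1 : Nat.testBit x j = false := Nat.testBit_lt_two_pow hx'
      simp only [bitN, Nat.testBit_two_pow_add_eq, h1]
      push_cast
      simp
      ring
    rw [Finset.sum_congr rfl this]
    simp
    ring
  | succ k ih =>
    intro a
    have h2 : 2 ^ (j + 1 + (k + 1)) = 2 ^ (j + 1 + k) + 2 ^ (j + 1 + k) := by
      rw [← add_assoc, pow_succ]; ring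
    rw [h2, Finset.sum_range_add, ih a]
    have : ∀ x ∈ Finset.range (2 ^ (j + 1 + k)),
        (a + d * ((2 ^ (j + 1 + k) + x : ℕ) : ℂ)) * (-1 : ℂ) ^ bitN j (2 ^ (j + 1 + k) + x)
          = ((a + d * 2 ^ (j + 1 + k)) + d * (x : ℂ)) * (-1 : ℂ) ^ bitN j x := by
      intro x hx
      have hlt : j < j + 1 + k := by omega
      simp only [bitN, Nat.testBit_two_pow_add_gt hlt]
      push_cast
      ring
    rw [Finset.sum_congr rfl this, ih]
    ring

/-- The Pauli coefficient of the diagonal matrix `D` (with entries `a + d·x`) at the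
single-qubit `Z` string `Z_j` equals
`2^{−n} · ∑_{x=0}^{2^n−1} (a + d·x)·(−1)^{bit_j(x)} = −(d/2)·2^j`. -/
theorem stmt_2 (n : ℕ) (hn : 1 ≤ n) (a d : ℝ) (j : Fin n) :
    (1 / (2 : ℂ) ^ n) * ∑ x : Fin (2 ^ n),
        ((a : ℂ) + (d : ℂ) * (x.val : ℂ)) * (-1 : ℂ) ^ bitN j.val x.val
      = -((d : ℂ) / 2) * (2 : ℂ) ^ (j : ℕ) := by
  obtain ⟨j, hj⟩ := j
  obtain ⟨k, rfl⟩ : ∃ k, n = j + 1 + k := ⟨n - (j + 1), by omega⟩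
  have h := aux_sum j k (d : ℂ) (a : ℂ)
  rw [← Fin.sum_univ_eq_sum_range
    (fun x : ℕ => ((a : ℂ) + (d : ℂ) * (x : ℂ)) * (-1 : ℂ) ^ bitN j x)] at h
  simp only
  rw [h]
  have : (2 : ℂ) ^ (j + 1 + k) ≠ 0 := pow_ne_zero _ two_ne_zero
  field_simp
end
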